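/- Let R be an integral domain, X an indeterminate over R, and * a star operation of finite character on R[X]. The following statements are equivalent: (i) every upper to zero in R[X] is a *-maximal ideal of R[X]; (ii) R is a UMT-domain and t-Max(R[X]) = *-Max(R[X]). -/

import Mathlib

open Polynomial

/-- A *star operation* on a domain `S` with quotient field `M`: a map on the nonzero
fractional ideals of `S` satisfying `(aI)^* = aI^*`, `I ⊆ I^*`, monotonicity,
idempotency and `S^* = S`. -/
structure IsStarOperation (S M : Type*) [CommRing S] [IsDomain S] [Field M] [Algebra S M]
    [IsFractionRing S M]
    (star : FractionalIdeal (nonZeroDivisors S) M → FractionalIdeal (nonZeroDivisors S) M) :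
    Prop where
  smul_eq : ∀ a : M, a ≠ 0 → ∀ I, I ≠ 0 →
    star (FractionalIdeal.spanSingleton (nonZeroDivisors S) a * I) =
      FractionalIdeal.spanSingleton (nonZeroDivisors S) a * star I
  le_star : ∀ I, I ≠ 0 → I ≤ star I
  mono : ∀ I J, I ≠ 0 → J ≠ 0 → I ≤ J → star I ≤ star J
  idem : ∀ I, I ≠ 0 → star (star I) = star I
  star_one : star 1 = 1

/-- A star operation has *finite character* if
`I^* = ⋃ {J^* : J nonzero finitely generated fractional ideal, J ⊆ I}`. -/
def StarFiniteCharacter (S M : Type*) [CommRing S] [IsDomain S] [Field M] [Algebra S M]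
    [IsFractionRing S M]
    (star : FractionalIdeal (nonZeroDivisors S) M → FractionalIdeal (nonZeroDivisors S) M) :
    Prop :=
  ∀ I, I ≠ 0 → ∀ x : M,
    x ∈ star I ↔ ∃ J : FractionalIdeal (nonZeroDivisors S) M, J ≠ 0 ∧ (J : Submodule S M).FG ∧ J ≤ I ∧ x ∈ star J

/-- `Q` is a `*`-maximal ideal: a proper nonzero integral `*`-ideal which is maximal
among proper integral `*`-ideals. -/
def IsStarMaximal {S M : Type*} [CommRing S] [IsDomain S] [Field M] [Algebra S M]
    [IsFractionRing S M]
    (star : FractionalIdeal (nonZeroDivisors S) M → FractionalIdeal (nonZeroDivisors S) M)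
    (Q : Ideal S) : Prop :=
  Q ≠ ⊥ ∧ Q ≠ ⊤ ∧ star ↑Q = (Q : FractionalIdeal (nonZeroDivisors S) M) ∧
    ∀ J : Ideal S, J ≠ ⊥ → J ≠ ⊤ → star ↑J = (J : FractionalIdeal (nonZeroDivisors S) M) →
      Q ≤ J → Q = J

/-- An *upper to zero* in `R[X]`: a nonzero prime ideal `Q` with `Q ∩ R = (0)`. -/
def IsUpperToZero {R : Type*} [CommRing R] [IsDomain R] (Q : Ideal R[X]) : Prop :=
  Q.IsPrime ∧ Q ≠ ⊥ ∧ Q.comap (C : R →+* R[X]) = ⊥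

/-- `c(Q)`: the content of an ideal `Q` of `R[X]`, the ideal of `R` generated by the
coefficients of all elements of `Q`. -/
def contentIdeal {R : Type*} [CommRing R] (Q : Ideal R[X]) : Ideal R :=
  Ideal.span {a : R | ∃ f ∈ Q, ∃ n, f.coeff n = a}

/-- `c(f)`: the content of a polynomial, the ideal generated by its coefficients. -/
def coeffIdeal {R : Type*} [CommRing R] (f : R[X]) : Ideal R :=
  Ideal.span {a : R | ∃ n, f.coeff n = a}

variable {R K L : Type*} [CommRing R] [IsDomain R]
  [Field K] [Algebra R K] [IsFractionRing R K]
  [Field L] [Algebra R[X] L] [IsFractionRing R[X] L]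

/-- `I^{\bar{*}} = (I[X])^* ∩ K` for an integral ideal `I` of `R`, as a subset of `K`;
here `ι : K →+* L = K(X)` is the canonical embedding. -/
def barStarSet
    (star : FractionalIdeal (nonZeroDivisors R[X]) L → FractionalIdeal (nonZeroDivisors R[X]) L)
    (ι : K →+* L) (I : Ideal R) : Set K :=
  {x : K | ι x ∈ star ((I.map (C : R →+* R[X]) : Ideal R[X]) :
      FractionalIdeal (nonZeroDivisors R[X]) L)}

/-- `I_t = ⋃ {J_v : J nonzero finitely generated fractional ideal, J ⊆ I}`, as a subset of
the quotient field, where `J_v = (S : (S : J)) = 1/(1/J)`. -/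
def tSet {S M : Type*} [CommRing S] [IsDomain S] [Field M] [Algebra S M] [IsFractionRing S M]
    (I : FractionalIdeal (nonZeroDivisors S) M) : Set M :=
  ⋃ J ∈ {J : FractionalIdeal (nonZeroDivisors S) M |
      J ≠ 0 ∧ (J : Submodule S M).FG ∧ J ≤ I},
    (((1 / (1 / J) : FractionalIdeal (nonZeroDivisors S) M) : Submodule S M) : Set M)

/-- `Q` is a `t`-maximal ideal of `S`: a proper nonzero integral `t`-ideal maximal among
proper integral `t`-ideals. -/
def IsTMaximal {S : Type*} (M : Type*) [CommRing S] [IsDomain S] [Field M] [Algebra S M]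
    [IsFractionRing S M] (Q : Ideal S) : Prop :=
  Q ≠ ⊥ ∧ Q ≠ ⊤ ∧
    tSet (Q : FractionalIdeal (nonZeroDivisors S) M) =
      (((Q : FractionalIdeal (nonZeroDivisors S) M) : Submodule S M) : Set M) ∧
    ∀ J : Ideal S, J ≠ ⊥ → J ≠ ⊤ →
      tSet (J : FractionalIdeal (nonZeroDivisors S) M) =
        (((J : FractionalIdeal (nonZeroDivisors S) M) : Submodule S M) : Set M) →
      Q ≤ J → Q = J

/-!
The `t`-operation is the coarsest star operation of finite character, so `t`-ideals are `*`-ideals;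
and an upper to zero `Q` is a `t`-ideal because it is the contraction of a principal ideal of
`K[X]`. The heart of the matter is that a `*`-maximal ideal `N` of `R[X]` which is not a `t`-ideal
contains an upper to zero. By maximality, `N` contains a finitely generated `J` with `J_v = R[X]`,
and `J` contains a polynomial `f` with the same content as `J`. For every nonzero `s ∈ R`, McCoy's
theorem over `R / s` then shows that `f` is regular modulo `s`, equivalently that `s` is regular
modulo `f`, so a minimal prime of `(f)` inside `N` meets `R` only in zero.

If every upper to zero is `*`-maximal, such an upper to zero would be all of `N`, hence `N` would be
a `t`-ideal after all. Thus all `*`-maximal ideals are `t`-ideals, and the two kinds of maximal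
ideals coincide.
-/

section StarOperations

open scoped nonZeroDivisors

variable {S M : Type*} [CommRing S] [Field M] [Algebra S M] [IsFractionRing S M]

lemma exists_fg_coeIdeal_eq {I : Ideal S} {J : FractionalIdeal S⁰ M} (hJ : J ≠ 0)
    (hJ_fg : (J : Submodule S M).FG) (hJI : J ≤ I) :
    ∃ J' : Ideal S, (J' : FractionalIdeal S⁰ M) = J ∧ J' ≠ ⊥ ∧ J'.FG ∧ J' ≤ I := by
  obtain ⟨J', rfl⟩ := FractionalIdeal.le_one_iff_exists_coeIdeal.1
    (hJI.trans FractionalIdeal.coeIdeal_le_one)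
  exact ⟨J', rfl, FractionalIdeal.coeIdeal_ne_zero.1 hJ,
    (FractionalIdeal.coeIdeal_fg _ (IsFractionRing.injective S M) J').1 hJ_fg,
    (FractionalIdeal.coeIdeal_le_coeIdeal M).1 hJI⟩

variable [IsDomain S]

lemma one_div_fractionalIdeal_ne_zero {I : FractionalIdeal S⁰ M} (hI : I ≠ 0) : 1 / I ≠ 0 := by
  obtain ⟨a, ha, hI_int⟩ := I.isFractional
  have h_mem : algebraMap S M a ∈ 1 / I := by
    rw [FractionalIdeal.mem_div_iff_of_ne_zero hI]
    intro y hy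
    obtain ⟨z, hz⟩ := hI_int y hy
    exact (FractionalIdeal.mem_one_iff _).2 ⟨z, by rw [hz, Algebra.smul_def]⟩
  intro h
  rw [h, FractionalIdeal.mem_zero_iff] at h_mem
  exact IsFractionRing.to_map_ne_zero_of_mem_nonZeroDivisors ha h_mem

/-- The divisorial closure `I_v = (S : (S : I))` of a fractional ideal. -/
noncomputable def vClosure (I : FractionalIdeal S⁰ M) : FractionalIdeal S⁰ M := 1 / (1 / I)

lemma mem_vClosure_iff {I : FractionalIdeal S⁰ M} (hI : I ≠ 0) {x : M} :
    x ∈ vClosure I ↔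
      ∀ q : M, (∀ y ∈ I, q * y ∈ (1 : FractionalIdeal S⁰ M)) →
        x * q ∈ (1 : FractionalIdeal S⁰ M) := by
  simp only [vClosure, FractionalIdeal.mem_div_iff_of_ne_zero (one_div_fractionalIdeal_ne_zero hI),
    FractionalIdeal.mem_div_iff_of_ne_zero hI]

lemma le_vClosure {I : FractionalIdeal S⁰ M} (hI : I ≠ 0) : I ≤ vClosure I :=
  fun x hx ↦ (mem_vClosure_iff hI).2 fun q hq ↦ mul_comm q x ▸ hq x hx

lemma vClosure_le_vClosure_of_le {I J : FractionalIdeal S⁰ M} (hI : I ≠ 0) (hJ : J ≠ 0)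
    (h : I ≤ vClosure J) : vClosure I ≤ vClosure J :=
  fun _ hx ↦ (mem_vClosure_iff hJ).2 fun q hq ↦ (mem_vClosure_iff hI).1 hx q fun y hy ↦
    mul_comm y q ▸ (mem_vClosure_iff hJ).1 (h hy) q hq

lemma vClosure_le_one {I : FractionalIdeal S⁰ M} (hI : I ≠ 0) (hI_int : I ≤ 1) :
    vClosure I ≤ 1 := by
  intro x hx
  rw [← mul_one x]
  exact (mem_vClosure_iff hI).1 hx 1 fun y hy ↦ by rw [one_mul]; exact hI_int hy

lemma dvd_mul_of_algebraMap_mem_vClosure {J : Ideal S} (hJ : J ≠ ⊥) {x : S}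
    (hx : algebraMap S M x ∈ vClosure (J : FractionalIdeal S⁰ M)) {a b : S} (hb : b ≠ 0)
    (h : ∀ j ∈ J, b ∣ a * j) : b ∣ a * x := by
  have hb_map : algebraMap S M b ≠ 0 := by simpa using hb
  have h_div : ∀ y ∈ (J : FractionalIdeal S⁰ M),
      algebraMap S M a / algebraMap S M b * y ∈ (1 : FractionalIdeal S⁰ M) := by
    intro y hy
    obtain ⟨j, hj, rfl⟩ := (FractionalIdeal.mem_coeIdeal _).1 hy
    obtain ⟨c, hc⟩ := h j hj
    refine (FractionalIdeal.mem_one_iff _).2 ⟨c, ?_⟩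
    rw [div_mul_eq_mul_div, ← map_mul, hc, map_mul, mul_div_cancel_left₀ _ hb_map]
  obtain ⟨c, hc⟩ := (FractionalIdeal.mem_one_iff _).1 <|
    (mem_vClosure_iff (FractionalIdeal.coeIdeal_ne_zero.2 hJ)).1 hx _ h_div
  refine ⟨c, IsFractionRing.injective S M ?_⟩
  rw [map_mul, map_mul, hc]
  field_simp

/-- The property `I_t = I` of a fractional ideal, where `I_t` is the set `tSet I`. -/
def IsTIdeal (I : FractionalIdeal S⁰ M) : Prop := tSet I = ((I : Submodule S M) : Set M)

lemma mem_tSet_iff {I : FractionalIdeal S⁰ M} {x : M} :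
    x ∈ tSet I ↔ ∃ J : FractionalIdeal S⁰ M,
      (J ≠ 0 ∧ (J : Submodule S M).FG ∧ J ≤ I) ∧ x ∈ vClosure J := by
  simp only [tSet, Set.mem_iUnion, Set.mem_ofPred_eq, exists_prop]
  rfl

lemma subset_tSet {I : FractionalIdeal S⁰ M} (hI : I ≠ 0) :
    ((I : Submodule S M) : Set M) ⊆ tSet I := by
  have h_singleton : ∀ x ∈ I, x ≠ 0 → ∃ J : FractionalIdeal S⁰ M,
      (J ≠ 0 ∧ (J : Submodule S M).FG ∧ J ≤ I) ∧ x ∈ J := fun x hx hx0 ↦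
    ⟨FractionalIdeal.spanSingleton S⁰ x,
      ⟨FractionalIdeal.spanSingleton_ne_zero_iff.2 hx0,
        by rw [FractionalIdeal.coe_spanSingleton]; exact Submodule.fg_span_singleton x,
        FractionalIdeal.spanSingleton_le_iff_mem.2 hx⟩,
      FractionalIdeal.mem_spanSingleton_self S⁰ x⟩
  intro x hx
  by_cases hx0 : x = 0
  · obtain ⟨y, hy, hy0⟩ : ∃ y ∈ I, y ≠ 0 := by
      simpa [FractionalIdeal.eq_zero_iff] using hI
    obtain ⟨J, hJ, -⟩ := h_singleton y hy hy0
    exact mem_tSet_iff.2 ⟨J, hJ, hx0 ▸ (vClosure J).zero_mem⟩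
  · obtain ⟨J, hJ, hxJ⟩ := h_singleton x hx hx0
    exact mem_tSet_iff.2 ⟨J, hJ, le_vClosure hJ.1 hxJ⟩

lemma isTIdeal_coeIdeal_iff {I : Ideal S} (hI : I ≠ ⊥) :
    IsTIdeal (I : FractionalIdeal S⁰ M) ↔
      ∀ J : Ideal S, J ≠ ⊥ → J.FG → J ≤ I →
        vClosure (J : FractionalIdeal S⁰ M) ≤ (I : FractionalIdeal S⁰ M) := by
  constructor
  · intro h J hJ hJ_fg hJI x hx
    have hx_t : x ∈ tSet (I : FractionalIdeal S⁰ M) := mem_tSet_iff.2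
      ⟨J, ⟨FractionalIdeal.coeIdeal_ne_zero.2 hJ,
        (FractionalIdeal.coeIdeal_fg _ (IsFractionRing.injective S M) J).2 hJ_fg,
        (FractionalIdeal.coeIdeal_le_coeIdeal M).2 hJI⟩, hx⟩
    rwa [h] at hx_t
  · intro h
    refine Set.Subset.antisymm (fun x hx ↦ ?_) (subset_tSet (FractionalIdeal.coeIdeal_ne_zero.2 hI))
    obtain ⟨J, ⟨hJ, hJ_fg, hJI⟩, hxJ⟩ := mem_tSet_iff.1 hx
    obtain ⟨J', rfl, hJ', hJ'_fg, hJ'I⟩ := exists_fg_coeIdeal_eq hJ hJ_fg hJI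
    exact h J' hJ' hJ'_fg hJ'I hxJ

variable {star : FractionalIdeal S⁰ M → FractionalIdeal S⁰ M}

lemma IsStarOperation.star_le_vClosure (hstar : IsStarOperation S M star)
    {I : FractionalIdeal S⁰ M} (hI : I ≠ 0) : star I ≤ vClosure I := by
  intro x hx
  rw [mem_vClosure_iff hI]
  intro q hqI
  rcases eq_or_ne q 0 with rfl | hq
  · simp only [mul_zero, FractionalIdeal.zero_mem]
  have hqI_ne : FractionalIdeal.spanSingleton S⁰ q * I ≠ 0 := fun h ↦ hI <| by
    rw [← one_mul I, ← FractionalIdeal.spanSingleton_inv_mul M hq, mul_assoc, h, mul_zero]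
  have h_le : FractionalIdeal.spanSingleton S⁰ q * star I ≤ 1 := by
    rw [← hstar.smul_eq q hq I hI, ← hstar.star_one]
    exact hstar.mono _ _ hqI_ne one_ne_zero (FractionalIdeal.spanSingleton_mul_le_iff.2 hqI)
  exact mul_comm q x ▸ FractionalIdeal.spanSingleton_mul_le_iff.1 h_le x hx

lemma IsStarOperation.star_eq_of_isTIdeal (hstar : IsStarOperation S M star)
    (hfc : StarFiniteCharacter S M star) {I : FractionalIdeal S⁰ M} (hI : I ≠ 0)
    (hI_t : IsTIdeal I) : star I = I := by
  refine le_antisymm (fun x hx ↦ ?_) (hstar.le_star I hI)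
  obtain ⟨J, hJ, hJ_fg, hJI, hxJ⟩ := (hfc I hI x).1 hx
  have hx_t : x ∈ tSet I := mem_tSet_iff.2 ⟨J, ⟨hJ, hJ_fg, hJI⟩, hstar.star_le_vClosure hJ hxJ⟩
  rwa [hI_t] at hx_t

lemma IsStarOperation.exists_coeIdeal_eq_star (hstar : IsStarOperation S M star) {I : Ideal S}
    (hI : I ≠ ⊥) :
    ∃ I' : Ideal S, (I' : FractionalIdeal S⁰ M) = star (I : FractionalIdeal S⁰ M) := by
  have hI_ne := FractionalIdeal.coeIdeal_ne_zero (K := M).2 hI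
  exact FractionalIdeal.le_one_iff_exists_coeIdeal.1 <|
    (hstar.star_le_vClosure hI_ne).trans (vClosure_le_one hI_ne FractionalIdeal.coeIdeal_le_one)

lemma StarFiniteCharacter.exists_fg_mem_star (hfc : StarFiniteCharacter S M star) {I : Ideal S}
    (hI : I ≠ ⊥) {x : M} (hx : x ∈ star (I : FractionalIdeal S⁰ M)) :
    ∃ J : Ideal S, J ≠ ⊥ ∧ J.FG ∧ J ≤ I ∧ x ∈ star (J : FractionalIdeal S⁰ M) := by
  obtain ⟨J, hJ, hJ_fg, hJI, hxJ⟩ := (hfc _ (FractionalIdeal.coeIdeal_ne_zero.2 hI) x).1 hx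
  obtain ⟨J', rfl, hJ', hJ'_fg, hJ'I⟩ := exists_fg_coeIdeal_eq hJ hJ_fg hJI
  exact ⟨J', hJ', hJ'_fg, hJ'I, hxJ⟩

lemma IsStarOperation.star_sSup_eq_of_directedOn (hstar : IsStarOperation S M star)
    (hfc : StarFiniteCharacter S M star) {c : Set (Ideal S)} (hc_ne : c.Nonempty)
    (hc_dir : DirectedOn (· ≤ ·) c)
    (hc : ∀ I ∈ c, I ≠ ⊥ ∧ star I = (I : FractionalIdeal S⁰ M)) :
    star (sSup c : Ideal S) = ((sSup c : Ideal S) : FractionalIdeal S⁰ M) := by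
  obtain ⟨I₀, hI₀⟩ := hc_ne
  have h_ne : sSup c ≠ ⊥ := ne_bot_of_le_ne_bot (hc I₀ hI₀).1 (le_sSup hI₀)
  refine le_antisymm (fun x hx ↦ ?_) (hstar.le_star _ (FractionalIdeal.coeIdeal_ne_zero.2 h_ne))
  obtain ⟨J, hJ, hJ_fg, hJc, hxJ⟩ := hfc.exists_fg_mem_star h_ne hx
  obtain ⟨I, hI, hJI⟩ :=
    (CompleteLattice.isCompactElement_iff_le_of_directed_sSup_le (α := Ideal S) J).1
      ((Submodule.fg_iff_compact J).1 hJ_fg) c ⟨I₀, hI₀⟩ hc_dir hJc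
  have hxI : x ∈ star (I : FractionalIdeal S⁰ M) :=
    hstar.mono _ _ (FractionalIdeal.coeIdeal_ne_zero.2 hJ)
      (FractionalIdeal.coeIdeal_ne_zero.2 (hc I hI).1)
      ((FractionalIdeal.coeIdeal_le_coeIdeal M).2 hJI) hxJ
  rw [(hc I hI).2] at hxI
  exact (FractionalIdeal.coeIdeal_le_coeIdeal M).2 (le_sSup hI) hxI

lemma IsStarOperation.exists_le_isStarMaximal (hstar : IsStarOperation S M star)
    (hfc : StarFiniteCharacter S M star) {I : Ideal S} (hI_bot : I ≠ ⊥) (hI_top : I ≠ ⊤)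
    (hI : star I = (I : FractionalIdeal S⁰ M)) : ∃ N, I ≤ N ∧ IsStarMaximal star N := by
  obtain ⟨N, hIN, hN⟩ := zorn_le_nonempty₀
    {J : Ideal S | J ≠ ⊥ ∧ J ≠ ⊤ ∧ star J = (J : FractionalIdeal S⁰ M)}
    (fun c hc hc_chain J hJ ↦
      ⟨sSup c,
        ⟨ne_bot_of_le_ne_bot (hc hJ).1 (le_sSup hJ),
          fun h_top ↦ by
            obtain ⟨J', hJ', h_one⟩ := (Submodule.mem_sSup_of_directed ⟨J, hJ⟩
              hc_chain.directedOn).1 ((Ideal.eq_top_iff_one _).1 h_top)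
            exact (hc hJ').2.1 ((Ideal.eq_top_iff_one J').2 h_one),
          hstar.star_sSup_eq_of_directedOn hfc ⟨J, hJ⟩ hc_chain.directedOn
            fun J' hJ' ↦ ⟨(hc hJ').1, (hc hJ').2.2⟩⟩,
        fun _ ↦ le_sSup⟩)
    I ⟨hI_bot, hI_top, hI⟩
  exact ⟨N, hIN, hN.prop.1, hN.prop.2.1, hN.prop.2.2,
    fun J hJ_bot hJ_top hJ hNJ ↦ hN.eq_of_le ⟨hJ_bot, hJ_top, hJ⟩ hNJ⟩

lemma IsStarMaximal.star_sup_span_singleton_eq_one (hstar : IsStarOperation S M star)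
    {N : Ideal S} (hN : IsStarMaximal star N) {x : S} (hx : x ∉ N) :
    star (N ⊔ Ideal.span {x} : Ideal S) = 1 := by
  have h_bot : N ⊔ Ideal.span {x} ≠ ⊥ := ne_bot_of_le_ne_bot hN.1 le_sup_left
  have h_ne := FractionalIdeal.coeIdeal_ne_zero (K := M).2 h_bot
  obtain ⟨I, hI⟩ := hstar.exists_coeIdeal_eq_star h_bot
  have h_le : N ⊔ Ideal.span {x} ≤ I := by
    rw [← FractionalIdeal.coeIdeal_le_coeIdeal M, hI]
    exact hstar.le_star _ h_ne
  suffices I = ⊤ by rw [← hI, this, FractionalIdeal.coeIdeal_top]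
  by_contra hI_top
  have hNI : N = I := hN.2.2.2 I (ne_bot_of_le_ne_bot h_bot h_le) hI_top
    (by rw [hI, hstar.idem _ h_ne]) (le_sup_left.trans h_le)
  exact hx (hNI ▸ h_le (Submodule.mem_sup_right (Ideal.mem_span_singleton_self x)))

lemma IsStarMaximal.isPrime (hstar : IsStarOperation S M star) {N : Ideal S}
    (hN : IsStarMaximal star N) : N.IsPrime := by
  refine ⟨hN.2.1, fun {x y} hxy ↦ or_iff_not_imp_left.2 fun hx ↦ ?_⟩
  rcases eq_or_ne y 0 with rfl | hy
  · exact N.zero_mem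
  have h_bot : N ⊔ Ideal.span {x} ≠ ⊥ := ne_bot_of_le_ne_bot hN.1 le_sup_left
  have h_le : Ideal.span {y} * (N ⊔ Ideal.span {x}) ≤ N := by
    rw [Ideal.mul_sup, Ideal.span_singleton_mul_span_singleton]
    exact sup_le Ideal.mul_le_right ((Ideal.span_singleton_le_iff_mem _).2 (mul_comm x y ▸ hxy))
  have h_star := hstar.mono _ _
    (FractionalIdeal.coeIdeal_ne_zero.2 (mul_ne_zero (by simpa using hy) h_bot))
    (FractionalIdeal.coeIdeal_ne_zero.2 hN.1) ((FractionalIdeal.coeIdeal_le_coeIdeal M).2 h_le)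
  rw [FractionalIdeal.coeIdeal_mul, FractionalIdeal.coeIdeal_span_singleton,
    hstar.smul_eq _ (by simpa using hy) _ (FractionalIdeal.coeIdeal_ne_zero.2 h_bot),
    hN.star_sup_span_singleton_eq_one hstar hx, mul_one, hN.2.2.1,
    FractionalIdeal.spanSingleton_le_iff_mem] at h_star
  simpa [FractionalIdeal.mem_coeIdeal] using h_star

lemma IsStarMaximal.isTMaximal (hstar : IsStarOperation S M star)
    (hfc : StarFiniteCharacter S M star) {N : Ideal S} (hN : IsStarMaximal star N)
    (hN_t : IsTIdeal (N : FractionalIdeal S⁰ M)) : IsTMaximal M N :=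
  ⟨hN.1, hN.2.1, hN_t, fun J hJ_bot hJ_top hJ_t ↦ hN.2.2.2 J hJ_bot hJ_top <|
    hstar.star_eq_of_isTIdeal hfc (FractionalIdeal.coeIdeal_ne_zero.2 hJ_bot) hJ_t⟩

lemma exists_fg_le_sup_of_le_sup {R E : Type*} [Semiring R] [AddCommMonoid E] [Module R E]
    {B N P : Submodule R E} (hB : B.FG) (h : B ≤ N ⊔ P) :
    ∃ A ≤ N, A.FG ∧ B ≤ A ⊔ P := by
  induction B, hB using Submodule.fg_induction with
  | singleton b =>
    obtain ⟨n, hn, p, hp, rfl⟩ := Submodule.mem_sup.1 (h (Submodule.mem_span_singleton_self b))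
    refine ⟨R ∙ n, (Submodule.span_singleton_le_iff_mem _ _).2 hn,
      Submodule.fg_span_singleton n, ?_⟩
    rw [Submodule.span_singleton_le_iff_mem]
    exact Submodule.add_mem_sup (Submodule.mem_span_singleton_self n) hp
  | sup B₁ B₂ _ _ ih₁ ih₂ =>
    obtain ⟨A₁, hA₁N, hA₁, hB₁⟩ := ih₁ (le_sup_left.trans h)
    obtain ⟨A₂, hA₂N, hA₂, hB₂⟩ := ih₂ (le_sup_right.trans h)
    exact ⟨A₁ ⊔ A₂, sup_le hA₁N hA₂N, hA₁.sup hA₂, sup_le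
      (hB₁.trans (sup_le_sup_right le_sup_left P)) (hB₂.trans (sup_le_sup_right le_sup_right P))⟩

lemma IsStarMaximal.exists_fg_one_mem_vClosure (hstar : IsStarOperation S M star)
    (hfc : StarFiniteCharacter S M star) {N : Ideal S} (hN : IsStarMaximal star N)
    (hN_t : ¬ IsTIdeal (N : FractionalIdeal S⁰ M)) :
    ∃ J ≤ N, J ≠ ⊥ ∧ J.FG ∧ 1 ∈ vClosure (J : FractionalIdeal S⁰ M) := by
  obtain ⟨J, hJ, hJ_fg, hJN, hJ_v⟩ : ∃ J : Ideal S, J ≠ ⊥ ∧ J.FG ∧ J ≤ N ∧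
      ¬ vClosure (J : FractionalIdeal S⁰ M) ≤ N := by
    simpa [isTIdeal_coeIdeal_iff hN.1] using hN_t
  have hJ_ne := FractionalIdeal.coeIdeal_ne_zero (K := M).2 hJ
  obtain ⟨I, hI⟩ := FractionalIdeal.le_one_iff_exists_coeIdeal.1
    (vClosure_le_one hJ_ne FractionalIdeal.coeIdeal_le_one)
  obtain ⟨x, hxI, hxN⟩ : ∃ x ∈ I, x ∉ N :=
    SetLike.not_le_iff_exists.1 (by rwa [← hI, FractionalIdeal.coeIdeal_le_coeIdeal] at hJ_v)
  obtain ⟨B, hB, hB_fg, hB_le, h_one⟩ := hfc.exists_fg_mem_star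
    (ne_bot_of_le_ne_bot hN.1 le_sup_left) (x := 1)
    (by rw [hN.star_sup_span_singleton_eq_one hstar hxN]; exact FractionalIdeal.one_mem_one S⁰)
  obtain ⟨A, hAN, hA_fg, hBA⟩ := exists_fg_le_sup_of_le_sup hB_fg hB_le
  have hJA : J ⊔ A ≠ ⊥ := ne_bot_of_le_ne_bot hJ le_sup_left
  have hJA_ne := FractionalIdeal.coeIdeal_ne_zero (K := M).2 hJA
  have hB_v : (B : FractionalIdeal S⁰ M) ≤ vClosure ((J ⊔ A : Ideal S) : FractionalIdeal S⁰ M) := by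
    have h_le := le_vClosure hJA_ne
    have hI_v : (I : FractionalIdeal S⁰ M) ≤ vClosure ((J ⊔ A : Ideal S) : FractionalIdeal S⁰ M) :=
      hI.trans_le (vClosure_le_vClosure_of_le hJ_ne hJA_ne
        (((FractionalIdeal.coeIdeal_le_coeIdeal M).2 le_sup_left).trans h_le))
    have hBAI : B ≤ A ⊔ I :=
      hBA.trans (sup_le_sup_left ((Ideal.span_singleton_le_iff_mem _).2 hxI) A)
    refine ((FractionalIdeal.coeIdeal_le_coeIdeal M).2 hBAI).trans ?_
    rw [FractionalIdeal.coeIdeal_sup]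
    exact sup_le (((FractionalIdeal.coeIdeal_le_coeIdeal M).2 le_sup_right).trans h_le) hI_v
  have hB_ne := FractionalIdeal.coeIdeal_ne_zero (K := M).2 hB
  exact ⟨J ⊔ A, sup_le hJN hAN, hJA, Submodule.FG.sup hJ_fg hA_fg,
    vClosure_le_vClosure_of_le hB_ne hJA_ne hB_v (hstar.star_le_vClosure hB_ne h_one)⟩

end StarOperations

section UppersToZero

open scoped nonZeroDivisors

lemma exists_mem_forall_dvd_mul_of_isLocalization {B : Type*} [CommRing B] (S : Submonoid B)
    (B' : Type*) [CommRing B'] [Algebra B B'] [IsLocalization S B'] [IsPrincipalIdealRing B']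
    (Q : Ideal B) : ∃ f ∈ Q, ∀ g ∈ Q, ∃ s ∈ S, f ∣ s * g := by
  obtain ⟨p, hp⟩ := (IsPrincipalIdealRing.principal (Q.map (algebraMap B B'))).principal
  obtain ⟨⟨⟨f, hf⟩, s⟩, hfs⟩ := (IsLocalization.mem_map_algebraMap_iff S B').1
    (hp ▸ Submodule.mem_span_singleton_self p)
  refine ⟨f, hf, fun g hg ↦ ?_⟩
  obtain ⟨q, hq⟩ : p ∣ algebraMap B B' g :=
    Ideal.mem_span_singleton.1 (hp.le (Ideal.mem_map_of_mem _ hg))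
  obtain ⟨⟨h, t⟩, hht⟩ := IsLocalization.surj S q
  obtain ⟨c, hc⟩ := (IsLocalization.eq_iff_exists S B').1
    (show algebraMap B B' (s * t * g) = algebraMap B B' (f * h) by
      rw [map_mul, map_mul, map_mul, ← hfs, ← hht, hq]; ring)
  exact ⟨c * (s * t), S.mul_mem c.2 (S.mul_mem s.2 t.2), c * h, by
    rw [mul_assoc, hc]; ring⟩

lemma exists_forall_dvd_mul_of_fg {B : Type*} [CommRing B] {S : Submonoid B} {f : B} {J : Ideal B}
    (hJ : J.FG) (h : ∀ j ∈ J, ∃ s ∈ S, f ∣ s * j) : ∃ s ∈ S, ∀ j ∈ J, f ∣ s * j := by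
  induction J, hJ using Submodule.fg_induction with
  | singleton g =>
    obtain ⟨s, hs, hsg⟩ := h g (Submodule.mem_span_singleton_self g)
    exact ⟨s, hs, fun j hj ↦ hsg.trans (mul_dvd_mul_left s (Ideal.mem_span_singleton.1 hj))⟩
  | sup J₁ J₂ _ _ ih₁ ih₂ =>
    obtain ⟨s, hs, hsJ⟩ := ih₁ fun j hj ↦ h j (Submodule.mem_sup_left hj)
    obtain ⟨t, ht, htJ⟩ := ih₂ fun j hj ↦ h j (Submodule.mem_sup_right hj)
    refine ⟨s * t, S.mul_mem hs ht, fun j hj ↦ ?_⟩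
    obtain ⟨j₁, hj₁, j₂, hj₂, rfl⟩ := Submodule.mem_sup.1 hj
    rw [show s * t * (j₁ + j₂) = s * j₁ * t + t * j₂ * s by ring]
    exact dvd_add ((hsJ j₁ hj₁).mul_right t) ((htJ j₂ hj₂).mul_right s)

lemma IsUpperToZero.isTIdeal {A M : Type*} [CommRing A] [IsDomain A] [Field M] [Algebra A[X] M]
    [IsFractionRing A[X] M] {Q : Ideal A[X]} (hQ : IsUpperToZero Q) :
    IsTIdeal (Q : FractionalIdeal A[X]⁰ M) := by
  obtain ⟨hQ_prime, hQ_bot, hQ_comap⟩ := hQ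
  let := Polynomial.algebra A (FractionRing A)
  have := Polynomial.isLocalization A⁰ (FractionRing A)
  obtain ⟨f, hf, hf_dvd⟩ := exists_mem_forall_dvd_mul_of_isLocalization
    (A⁰.map (C : A →+* A[X])) (FractionRing A)[X] Q
  have h_ne : ∀ s ∈ A⁰.map (C : A →+* A[X]), s ≠ 0 ∧ s ∉ Q := by
    rintro _ ⟨s, hs, rfl⟩
    have hs0 := nonZeroDivisors.ne_zero hs
    refine ⟨C_ne_zero.2 hs0, fun hsQ ↦ hs0 ?_⟩
    rwa [← Ideal.mem_bot, ← hQ_comap]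
  have hf0 : f ≠ 0 := by
    rintro rfl
    obtain ⟨g, hg, hg0⟩ := Submodule.exists_mem_ne_zero_of_ne_bot hQ_bot
    obtain ⟨s, hs, hsg⟩ := hf_dvd g hg
    exact mul_ne_zero (h_ne s hs).1 hg0 (zero_dvd_iff.1 hsg)
  rw [isTIdeal_coeIdeal_iff hQ_bot]
  intro J hJ hJ_fg hJQ x hx
  obtain ⟨s, hs, hsJ⟩ := exists_forall_dvd_mul_of_fg hJ_fg fun j hj ↦ hf_dvd j (hJQ hj)
  obtain ⟨y, rfl⟩ := (FractionalIdeal.mem_one_iff _).1 <|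
    vClosure_le_one (FractionalIdeal.coeIdeal_ne_zero.2 hJ) FractionalIdeal.coeIdeal_le_one hx
  have hsy : s * y ∈ Q := Q.mem_of_dvd (dvd_mul_of_algebraMap_mem_vClosure hJ hx hf0 hsJ) hf
  exact (FractionalIdeal.mem_coeIdeal _).2
    ⟨y, (hQ_prime.mem_or_mem hsy).resolve_left (h_ne s hs).2, rfl⟩

variable {A : Type*} [CommRing A]

lemma contentIdeal_sup_le_contentIdeal_add_X_pow_mul (f g : A[X]) :
    f.contentIdeal ⊔ g.contentIdeal ≤ (f + X ^ (f.natDegree + 1) * g).contentIdeal := by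
  set p := f + X ^ (f.natDegree + 1) * g
  refine sup_le ?_ ?_ <;> rw [contentIdeal_def, Ideal.span_le] <;> intro a ha <;>
    obtain ⟨i, hi, rfl⟩ := mem_coeffs_iff.1 ha
  · have h : p.coeff i = f.coeff i := by
      have := le_natDegree_of_mem_supp i hi
      rw [coeff_add, coeff_X_pow_mul', if_neg (by omega), add_zero]
    exact h ▸ p.coeff_mem_contentIdeal i
  · have h : p.coeff (i + (f.natDegree + 1)) = g.coeff i := by
      rw [coeff_add, coeff_X_pow_mul, coeff_eq_zero_of_natDegree_lt (by omega), zero_add]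
    exact h ▸ p.coeff_mem_contentIdeal _

lemma contentIdeal_add_le (f g : A[X]) :
    (f + g).contentIdeal ≤ f.contentIdeal ⊔ g.contentIdeal := by
  rw [contentIdeal_def, Ideal.span_le]
  intro a ha
  obtain ⟨i, -, rfl⟩ := mem_coeffs_iff.1 ha
  rw [coeff_add]
  exact Submodule.add_mem_sup (f.coeff_mem_contentIdeal i) (g.coeff_mem_contentIdeal i)

lemma exists_mem_forall_contentIdeal_le {J : Ideal A[X]} (hJ : J.FG) :
    ∃ f ∈ J, ∀ j ∈ J, j.contentIdeal ≤ f.contentIdeal := by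
  induction J, hJ using Submodule.fg_induction with
  | singleton g =>
    exact ⟨g, Submodule.mem_span_singleton_self g, fun j hj ↦
      g.contentIdeal_le_contentIdeal_of_dvd (Ideal.mem_span_singleton.1 hj)⟩
  | sup J₁ J₂ _ _ ih₁ ih₂ =>
    obtain ⟨f, hf, hf_le⟩ := ih₁
    obtain ⟨g, hg, hg_le⟩ := ih₂
    refine ⟨f + X ^ (f.natDegree + 1) * g,
      Submodule.add_mem_sup hf (Ideal.mul_mem_left J₂ _ hg), fun j hj ↦ ?_⟩
    obtain ⟨j₁, hj₁, j₂, hj₂, rfl⟩ := Submodule.mem_sup.1 hj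
    calc (j₁ + j₂).contentIdeal
      _ ≤ j₁.contentIdeal ⊔ j₂.contentIdeal := contentIdeal_add_le j₁ j₂
      _ ≤ f.contentIdeal ⊔ g.contentIdeal := sup_le_sup (hf_le j₁ hj₁) (hg_le j₂ hj₂)
      _ ≤ _ := contentIdeal_sup_le_contentIdeal_add_X_pow_mul f g

lemma C_dvd_C_mul_iff {s b : A} {f : A[X]} :
    C s ∣ C b * f ↔ Ideal.span {b} * f.contentIdeal ≤ Ideal.span {s} := by
  rw [C_dvd_iff_dvd_coeff, Ideal.span_singleton_mul_le_iff]
  simp only [coeff_C_mul, Ideal.mem_span_singleton]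
  refine ⟨fun h ↦ ?_, fun h i ↦ h _ (f.coeff_mem_contentIdeal i)⟩
  have h_le : f.contentIdeal ≤ Submodule.comap (LinearMap.mulLeft A b) (Ideal.span {s}) := by
    rw [contentIdeal_def, Ideal.span_le]
    intro a ha
    obtain ⟨i, -, rfl⟩ := mem_coeffs_iff.1 ha
    exact Ideal.mem_span_singleton.2 (h i)
  exact fun a ha ↦ Ideal.mem_span_singleton.1 (h_le ha)

lemma C_dvd_of_C_dvd_mul {s : A} {f : A[X]} (hf : ∀ b : A, C s ∣ C b * f → s ∣ b) {h : A[X]}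
    (hd : C s ∣ f * h) : C s ∣ h := by
  have h_map : ∀ p : A[X], p.map (Ideal.Quotient.mk (Ideal.span {s})) = 0 ↔ C s ∣ p := fun p ↦ by
    simp [C_dvd_iff_dvd_coeff, Polynomial.ext_iff, Ideal.Quotient.eq_zero_iff_mem,
      Ideal.mem_span_singleton]
  have hf_reg : f.map (Ideal.Quotient.mk (Ideal.span {s})) ∈ (A ⧸ Ideal.span {s})[X]⁰ := by
    -- McCoy: a zero divisor in a polynomial ring is annihilated by a nonzero constant.
    rw [Polynomial.mem_nonZeroDivisors_iff]
    intro a ha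
    obtain ⟨b, rfl⟩ := Ideal.Quotient.mk_surjective a
    rw [smul_eq_C_mul, ← map_C, ← Polynomial.map_mul, h_map] at ha
    exact Ideal.Quotient.eq_zero_iff_mem.2 (Ideal.mem_span_singleton.2 (hf b ha))
  rw [← h_map, Polynomial.map_mul] at hd
  exact (h_map h).1 (hf_reg.1 _ hd)

variable [IsDomain A]

lemma dvd_of_dvd_C_mul {f : A[X]} (hf : ∀ s ≠ 0, ∀ b : A, C s ∣ C b * f → s ∣ b) {s : A}
    (hs : s ≠ 0) {g : A[X]} (hg : f ∣ C s * g) : f ∣ g := by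
  obtain ⟨h, hh⟩ := hg
  obtain ⟨k, rfl⟩ := C_dvd_of_C_dvd_mul (hf s hs) ⟨g, hh.symm⟩
  exact ⟨k, mul_left_cancel₀ (C_ne_zero.2 hs) (by rw [hh]; ring)⟩

lemma exists_isUpperToZero_le_of_mem {f : A[X]} (hf0 : f ≠ 0)
    (hf : ∀ s : A, s ≠ 0 → ∀ g, f ∣ C s * g → f ∣ g) {N : Ideal A[X]} [N.IsPrime] (hfN : f ∈ N) :
    ∃ Q ≤ N, IsUpperToZero Q := by
  obtain ⟨Q, hQ, hQN⟩ :=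
    Ideal.exists_minimalPrimes_le ((Ideal.span_singleton_le_iff_mem N).2 hfN)
  have hfQ : f ∈ Q := hQ.le (Ideal.mem_span_singleton_self f)
  refine ⟨Q, hQN, hQ.isPrime, fun h ↦ hf0 (by rwa [h, Ideal.mem_bot] at hfQ),
    eq_bot_iff.2 fun s hsQ ↦ ?_⟩
  obtain ⟨g, hg, hsg⟩ := Ideal.exists_mul_mem_of_mem_minimalPrimes hQ hsQ
  rw [Ideal.mem_span_singleton] at hg hsg
  exact by_contra fun hs ↦ hg (hf s hs g hsg)

lemma IsStarMaximal.exists_isUpperToZero_le {M : Type*} [Field M] [Algebra A[X] M]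
    [IsFractionRing A[X] M] {star : FractionalIdeal A[X]⁰ M → FractionalIdeal A[X]⁰ M}
    (hstar : IsStarOperation A[X] M star) (hfc : StarFiniteCharacter A[X] M star)
    {N : Ideal A[X]} (hN : IsStarMaximal star N)
    (hN_t : ¬ IsTIdeal (N : FractionalIdeal A[X]⁰ M)) : ∃ Q ≤ N, IsUpperToZero Q := by
  obtain ⟨J, hJN, hJ, hJ_fg, h_one⟩ := hN.exists_fg_one_mem_vClosure hstar hfc hN_t
  obtain ⟨f, hfJ, hf_content⟩ := exists_mem_forall_contentIdeal_le hJ_fg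
  have hf0 : f ≠ 0 := by
    rintro rfl
    obtain ⟨j, hj, hj0⟩ := Submodule.exists_mem_ne_zero_of_ne_bot hJ
    exact hj0 (by simpa using hf_content j hj)
  have h_dvd : ∀ s ≠ 0, ∀ b : A, C s ∣ C b * f → s ∣ b := by
    intro s hs b hsb
    have hsJ : ∀ j ∈ J, C s ∣ C b * j := fun j hj ↦
      C_dvd_C_mul_iff.2 ((Ideal.mul_mono_right (hf_content j hj)).trans (C_dvd_C_mul_iff.1 hsb))
    have h := dvd_mul_of_algebraMap_mem_vClosure (M := M) (x := 1) hJ (by rwa [map_one])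
      (C_ne_zero.2 hs) hsJ
    simpa using (C_dvd_iff_dvd_coeff _ _).1 h 0
  have := hN.isPrime hstar
  exact exists_isUpperToZero_le_of_mem hf0 (fun s hs g ↦ dvd_of_dvd_C_mul h_dvd hs) (hJN hfJ)

lemma IsStarMaximal.isTIdeal_of_forall_isUpperToZero {M : Type*} [Field M] [Algebra A[X] M]
    [IsFractionRing A[X] M] {star : FractionalIdeal A[X]⁰ M → FractionalIdeal A[X]⁰ M}
    (hstar : IsStarOperation A[X] M star) (hfc : StarFiniteCharacter A[X] M star)
    (h : ∀ Q : Ideal A[X], IsUpperToZero Q → IsStarMaximal star Q)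
    {N : Ideal A[X]} (hN : IsStarMaximal star N) :
    IsTIdeal (N : FractionalIdeal A[X]⁰ M) := by
  by_contra hN_t
  obtain ⟨Q, hQN, hQ⟩ := hN.exists_isUpperToZero_le hstar hfc hN_t
  obtain rfl : Q = N := (h Q hQ).2.2.2 N hN.1 hN.2.1 hN.2.2.1 hQN
  exact hN_t hQ.isTIdeal

end UppersToZero

/-- every upper to zero in `R[X]` is `*`-maximal iff `R` is a `UMT`-domain
(every upper to zero in `R[X]` is `t`-maximal) and `t`-Max(`R[X]`) = `*`-Max(`R[X]`). -/
theorem statement17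
    (star : FractionalIdeal (nonZeroDivisors R[X]) L → FractionalIdeal (nonZeroDivisors R[X]) L)
    (hstar : IsStarOperation R[X] L star) (hfc : StarFiniteCharacter R[X] L star) :
    (∀ Q : Ideal R[X], IsUpperToZero Q → IsStarMaximal star Q) ↔
      ((∀ Q : Ideal R[X], IsUpperToZero Q → IsTMaximal L Q) ∧
        {Q : Ideal R[X] | IsTMaximal L Q} = {Q : Ideal R[X] | IsStarMaximal star Q}) := by
  constructor
  · intro h
    have h_t : ∀ N, IsStarMaximal star N → IsTMaximal L N := fun N hN ↦
      hN.isTMaximal hstar hfc (hN.isTIdeal_of_forall_isUpperToZero hstar hfc h)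
    refine ⟨fun Q hQ ↦ h_t Q (h Q hQ), Set.Subset.antisymm (fun M hM ↦ ?_) h_t⟩
    obtain ⟨hM_bot, hM_top, hM_t, hM_max⟩ := hM
    have hM_star := hstar.star_eq_of_isTIdeal hfc (FractionalIdeal.coeIdeal_ne_zero.2 hM_bot) hM_t
    obtain ⟨N, hMN, hN⟩ := hstar.exists_le_isStarMaximal hfc hM_bot hM_top hM_star
    obtain rfl : M = N := hM_max N hN.1 hN.2.1 (h_t N hN).2.2.1 hMN
    exact hN
  · rintro ⟨h_umt, h_eq⟩ Q hQ
    exact h_eq.subset (h_umt Q hQ)
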